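/- (S-level pairs) Let n ≥ 3. Let l and x be elements of one level L₁ of M_{n,n} with l the link element of L₁ and x ≠ l, and let L₂ be the other level. If S = L₂ and T = {l, x}, then (S, T) is a maximal ST-pair of M_{n,n}. -/

import Mathlib

/-- The underlying set of the lattice `M_{n,n}`: a bottom element `0`, a top
element `1`, and two levels `a₁, …, aₙ` and `b₁, …, bₙ`.  Here `a i` (for
`i : Fin n`) stands for `a_{i+1}` and `b j` for `b_{j+1}`, so the link elements
are `aₙ = a ⟨n-1, _⟩` and `b₁ = b ⟨0, _⟩`. -/
inductive Mnn (n : ℕ) : Type where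
  | bot : Mnn n
  | top : Mnn n
  | a : Fin n → Mnn n
  | b : Fin n → Mnn n
deriving DecidableEq

namespace Mnn

/-- The order of `M_{n,n}`: `0` is least, `1` is greatest, `aᵢ ≤ b₁` for every
`i`, `aₙ ≤ bⱼ` for every `j`, and there are no other comparabilities besides
those forced by reflexivity. -/
def le {n : ℕ} : Mnn n → Mnn n → Prop
  | .bot, _ => True
  | .top, .top => True
  | .top, .bot => False
  | .top, .a _ => False
  | .top, .b _ => False
  | .a _, .top => True
  | .a _, .bot => False
  | .a i, .a j => i = j
  | .a i, .b j => (j : ℕ) = 0 ∨ (i : ℕ) = n - 1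
  | .b _, .top => True
  | .b _, .bot => False
  | .b _, .a _ => False
  | .b i, .b j => i = j

/-- The join operation of `M_{n,n}`. -/
def sup {n : ℕ} : Mnn n → Mnn n → Mnn n
  | .bot, x => x
  | .top, _ => .top
  | .a i, .bot => .a i
  | .a _, .top => .top
  | .a i, .a j => if i = j then .a i else .b ⟨0, Nat.lt_of_le_of_lt (Nat.zero_le _) i.isLt⟩
  | .a i, .b j => if (j : ℕ) = 0 ∨ (i : ℕ) = n - 1 then .b j else .top
  | .b i, .bot => .b i
  | .b _, .top => .top
  | .b i, .a j => if (i : ℕ) = 0 ∨ (j : ℕ) = n - 1 then .b i else .top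
  | .b i, .b j => if i = j then .b i else .top

/-- The meet operation of `M_{n,n}`. -/
def inf {n : ℕ} : Mnn n → Mnn n → Mnn n
  | .bot, _ => .bot
  | .top, x => x
  | .a _, .bot => .bot
  | .a i, .top => .a i
  | .a i, .a j => if i = j then .a i else .bot
  | .a i, .b j => if (j : ℕ) = 0 ∨ (i : ℕ) = n - 1 then .a i else .bot
  | .b _, .bot => .bot
  | .b i, .top => .b i
  | .b i, .a j => if (i : ℕ) = 0 ∨ (j : ℕ) = n - 1 then .a j else .bot
  | .b i, .b j => if i = j then .b i
      else .a ⟨n - 1, Nat.sub_lt (Nat.lt_of_le_of_lt (Nat.zero_le _) i.isLt) Nat.one_pos⟩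

theorem le_refl' {n : ℕ} (x : Mnn n) : le x x := by cases x <;> simp [le]

theorem le_trans' {n : ℕ} (x y z : Mnn n) (hxy : le x y) (hyz : le y z) : le x z := by
  cases x <;> cases y <;> cases z <;> simp_all [le] <;> omega

theorem le_antisymm' {n : ℕ} (x y : Mnn n) (hxy : le x y) (hyx : le y x) : x = y := by
  cases x <;> cases y <;> simp_all [le]

theorem le_sup_left' {n : ℕ} (x y : Mnn n) : le x (sup x y) := by
  cases x <;> cases y <;> dsimp only [sup] <;> (try split_ifs) <;> simp_all [le]

theorem le_sup_right' {n : ℕ} (x y : Mnn n) : le y (sup x y) := by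
  cases x <;> cases y <;> dsimp only [sup] <;> (try split_ifs) <;> simp_all [le]

theorem sup_le' {n : ℕ} (x y z : Mnn n) (hxz : le x z) (hyz : le y z) :
    le (sup x y) z := by
  cases x <;> cases y <;> cases z <;> dsimp only [sup] <;> (try split_ifs) <;>
    simp_all [le, Fin.ext_iff] <;> omega

theorem inf_le_left' {n : ℕ} (x y : Mnn n) : le (inf x y) x := by
  cases x <;> cases y <;> dsimp only [inf] <;> (try split_ifs) <;> simp_all [le]

theorem inf_le_right' {n : ℕ} (x y : Mnn n) : le (inf x y) y := by
  cases x <;> cases y <;> dsimp only [inf] <;> (try split_ifs) <;> simp_all [le]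

theorem le_inf' {n : ℕ} (x y z : Mnn n) (hxy : le x y) (hxz : le x z) :
    le x (inf y z) := by
  cases x <;> cases y <;> cases z <;> dsimp only [inf] <;> (try split_ifs) <;>
    simp_all [le, Fin.ext_iff] <;> omega

/-- `M_{n,n}` is a lattice. -/
instance instLattice (n : ℕ) : Lattice (Mnn n) where
  le := le
  sup := sup
  inf := inf
  le_refl := le_refl'
  le_trans := le_trans'
  le_antisymm := le_antisymm'
  le_sup_left := le_sup_left'
  le_sup_right := le_sup_right'
  sup_le := sup_le'
  inf_le_left := inf_le_left'
  inf_le_right := inf_le_right'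
  le_inf := le_inf'

/-- `M_{n,n}* = M_{n,n} ∖ {0, 1}`, the set of non-identity elements. -/
def star (n : ℕ) : Set (Mnn n) := {x | x ≠ .bot ∧ x ≠ .top}

/-- The level `{a₁, …, aₙ}` of `M_{n,n}`. -/
def aLevel (n : ℕ) : Set (Mnn n) := Set.range Mnn.a

/-- The level `{b₁, …, bₙ}` of `M_{n,n}`. -/
def bLevel (n : ℕ) : Set (Mnn n) := Set.range Mnn.b

/-- The link element `aₙ` of the level `{a₁, …, aₙ}`. -/
def aLink (n : ℕ) (h : 0 < n) : Mnn n := .a ⟨n - 1, Nat.sub_lt h Nat.one_pos⟩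

/-- The link element `b₁` of the level `{b₁, …, bₙ}`. -/
def bLink (n : ℕ) (h : 0 < n) : Mnn n := .b ⟨0, h⟩

end Mnn

/-- `L` is `ST`-meet distributive. -/
def IsSTMeetDistrib {α : Type*} [Lattice α] (S T : Set α) : Prop :=
  ∀ s ∈ S, ∀ t₁ ∈ T, ∀ t₂ ∈ T, s ⊓ (t₁ ⊔ t₂) = (s ⊓ t₁) ⊔ (s ⊓ t₂)

/-- `L` is `ST`-join distributive. -/
def IsSTJoinDistrib {α : Type*} [Lattice α] (S T : Set α) : Prop :=
  ∀ s ∈ S, ∀ t₁ ∈ T, ∀ t₂ ∈ T, s ⊔ (t₁ ⊓ t₂) = (s ⊔ t₁) ⊓ (s ⊔ t₂)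

/-- `L` is `ST`-distributive. -/
def IsSTDistrib {α : Type*} [Lattice α] (S T : Set α) : Prop :=
  IsSTMeetDistrib S T ∧ IsSTJoinDistrib S T

/-- `(S, T)` is a maximal `ST`-pair of `M_{n,n}` (subject to the conditions of
the search problem: `S, T ⊆ M_{n,n}*`, `S ∩ T = ∅`, `S ≠ ∅`, `T ≠ ∅`). -/
def MaximalSTPair (n : ℕ) (S T : Set (Mnn n)) : Prop :=
  S ⊆ Mnn.star n ∧ T ⊆ Mnn.star n ∧ S ∩ T = ∅ ∧ S.Nonempty ∧ T.Nonempty ∧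
  IsSTDistrib S T ∧
  (¬ ∃ S' : Set (Mnn n), S ⊂ S' ∧ S' ⊆ Mnn.star n ∧ S' ∩ T = ∅ ∧ IsSTDistrib S' T) ∧
  (¬ ∃ T' : Set (Mnn n), T ⊂ T' ∧ T' ⊆ Mnn.star n ∧ S ∩ T' = ∅ ∧ IsSTDistrib S T')

/-!
`M_{n,n}` is self-dual via `aᵢ ↔ bₙ₊₁₋ᵢ`, so we may take `S = {b₁, …, bₙ}` and `T = {aₙ, x}`.
Every element of `S` lies above `aₙ`. Hence join distributivity is absorption and meet
distributivity is the modular law, which holds because the height function is a strictly monotone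
valuation.

An ST-distributive pair cannot contain `s ∈ S` and `t₁, t₂ ∈ T` such that `s` is disjoint from `t₁`
and from `t₂` but not from `t₁ ⊔ t₂`. Adding some `aₖ` to `S` creates such a triple
`aₖ; aₙ, x`, because `aₖ ≤ b₁ = aₙ ⊔ x`. Adding some `aₖ` to `T` creates such a triple `b; x, aₖ`
for any `b ≠ b₁`, because `aₙ ≤ b ⊓ b₁ = b ⊓ (x ⊔ aₖ)`.
-/

section Lattice

variable {α β : Type*} [Lattice α] [Lattice β]

theorem isModularLattice_of_strictMono_valuation {M : Type*} [AddCancelCommMonoid M] [Preorder M]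
    {v : α → M} (hv : StrictMono v) (hval : ∀ x y, v (x ⊔ y) + v (x ⊓ y) = v x + v y) :
    IsModularLattice α where
  sup_inf_le_assoc_of_le {x} y {z} hxz := by
    have hle : x ⊔ y ⊓ z ≤ (x ⊔ y) ⊓ z :=
      sup_le (le_inf le_sup_left hxz) (inf_le_inf_right z le_sup_right)
    have hlower : v (x ⊔ y ⊓ z) + v (x ⊓ y) = v x + v (y ⊓ z) := by
      simpa only [inf_left_comm x y z, inf_eq_left.2 hxz, inf_comm y x] using hval x (y ⊓ z)
    have hupper : v (y ⊔ z) + v ((x ⊔ y) ⊓ z) = v (x ⊔ y) + v z := by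
      simpa only [sup_right_comm x y z, sup_eq_right.2 hxz, sup_comm z y] using hval (x ⊔ y) z
    have hxy := hval x y
    have hyz := hval y z
    have heq : v (x ⊔ y ⊓ z) = v ((x ⊔ y) ⊓ z) := by grind
    exact (eq_of_le_of_not_lt hle fun hlt => (hv hlt).ne heq).ge

variable {S T : Set α} {l s t₁ t₂ : α}

theorem isSTDistrib_preimage_ofDual :
    IsSTDistrib (OrderDual.ofDual ⁻¹' S) (OrderDual.ofDual ⁻¹' T) ↔ IsSTDistrib S T :=
  and_comm

section LatticeHom

variable {F : Type*} [FunLike F α β] [LatticeHomClass F α β] {S T : Set β}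

theorem IsSTMeetDistrib.preimage (h : IsSTMeetDistrib S T) (f : F) (hf : Function.Injective f) :
    IsSTMeetDistrib (f ⁻¹' S) (f ⁻¹' T) := fun s hs t₁ ht₁ t₂ ht₂ =>
  hf (by simpa only [map_sup, map_inf] using h (f s) hs (f t₁) ht₁ (f t₂) ht₂)

theorem IsSTJoinDistrib.preimage (h : IsSTJoinDistrib S T) (f : F) (hf : Function.Injective f) :
    IsSTJoinDistrib (f ⁻¹' S) (f ⁻¹' T) := fun s hs t₁ ht₁ t₂ ht₂ =>
  hf (by simpa only [map_sup, map_inf] using h (f s) hs (f t₁) ht₁ (f t₂) ht₂)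

theorem IsSTDistrib.preimage (h : IsSTDistrib S T) (f : F) (hf : Function.Injective f) :
    IsSTDistrib (f ⁻¹' S) (f ⁻¹' T) :=
  ⟨h.1.preimage f hf, h.2.preimage f hf⟩

end LatticeHom

theorem isSTMeetDistrib_pair :
    IsSTMeetDistrib S {t₁, t₂} ↔ ∀ s ∈ S, s ⊓ (t₁ ⊔ t₂) = (s ⊓ t₁) ⊔ (s ⊓ t₂) := by
  refine ⟨fun h s hs => h s hs t₁ (Or.inl rfl) t₂ (Or.inr rfl), fun h s hs => ?_⟩
  rintro _ (rfl | rfl) _ (rfl | rfl)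
  · simp only [sup_idem]
  · exact h s hs
  · simpa only [sup_comm] using h s hs
  · simp only [sup_idem]

theorem isSTJoinDistrib_pair :
    IsSTJoinDistrib S {t₁, t₂} ↔ ∀ s ∈ S, s ⊔ (t₁ ⊓ t₂) = (s ⊔ t₁) ⊓ (s ⊔ t₂) :=
  isSTMeetDistrib_pair (α := αᵒᵈ)

theorem isSTDistrib_pair_of_mem_lowerBounds [IsModularLattice α] (hl : l ∈ lowerBounds S) (x : α) :
    IsSTDistrib S {l, x} := by
  refine ⟨isSTMeetDistrib_pair.2 fun s hs => ?_, isSTJoinDistrib_pair.2 fun s hs => ?_⟩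
  · calc s ⊓ (l ⊔ x) = (l ⊔ x) ⊓ s := inf_comm _ _
      _ = l ⊔ x ⊓ s := sup_inf_assoc_of_le x (hl hs)
      _ = (s ⊓ l) ⊔ (s ⊓ x) := by rw [inf_eq_right.2 (hl hs), inf_comm x]
  · calc s ⊔ (l ⊓ x) = s := sup_eq_left.2 (inf_le_left.trans (hl hs))
      _ = s ⊓ (s ⊔ x) := inf_sup_self.symm
      _ = (s ⊔ l) ⊓ (s ⊔ x) := by rw [sup_eq_left.2 (hl hs)]

theorem IsSTMeetDistrib.disjoint_sup_right [OrderBot α] (h : IsSTMeetDistrib S T) (hs : s ∈ S)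
    (ht₁ : t₁ ∈ T) (ht₂ : t₂ ∈ T) (hd₁ : Disjoint s t₁) (hd₂ : Disjoint s t₂) :
    Disjoint s (t₁ ⊔ t₂) := by
  rw [disjoint_iff, h s hs t₁ ht₁ t₂ ht₂, hd₁.eq_bot, hd₂.eq_bot, sup_idem]

end Lattice

namespace Mnn

variable {n : ℕ} {hn : 0 < n} {i j k : Fin n} {S T : Set (Mnn n)}

instance : BoundedOrder (Mnn n) where
  bot := bot
  bot_le _ := trivial
  top := top
  le_top x := by cases x <;> trivial

theorem aLink_le_b (hn : 0 < n) (j : Fin n) : aLink n hn ≤ b j := Or.inr rfl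

theorem a_le_bLink (i : Fin n) (hn : 0 < n) : a i ≤ bLink n hn := Or.inl rfl

theorem a_sup_a (hij : i ≠ j) (hn : 0 < n) : a i ⊔ a j = bLink n hn := if_neg hij

theorem disjoint_a_a (hij : i ≠ j) : Disjoint (a i) (a j) :=
  disjoint_iff.2 (if_neg hij)

theorem disjoint_b_a (hj : b j ≠ bLink n hn) (hi : a i ≠ aLink n hn) : Disjoint (b j) (a i) := by
  refine disjoint_iff.2 (if_neg ?_)
  rintro (h | h)
  · exact hj (congrArg b (Fin.ext h))
  · exact hi (congrArg a (Fin.ext h))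

theorem aLevel_subset_star : aLevel n ⊆ star n := by
  rintro _ ⟨i, rfl⟩
  exact ⟨nofun, nofun⟩

theorem bLevel_subset_star : bLevel n ⊆ star n := by
  rintro _ ⟨j, rfl⟩
  exact ⟨nofun, nofun⟩

theorem star_subset_aLevel_union_bLevel : star n ⊆ aLevel n ∪ bLevel n := by
  rintro (_ | _ | i | j) hx
  · exact absurd rfl hx.1
  · exact absurd rfl hx.2
  · exact Or.inl ⟨i, rfl⟩
  · exact Or.inr ⟨j, rfl⟩

theorem disjoint_aLevel_bLevel : Disjoint (aLevel n) (bLevel n) := by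
  rw [Set.disjoint_left]
  rintro _ ⟨i, rfl⟩ ⟨j, h⟩
  cases h

/-- The height of an element of `M_{n,n}`, that is, the length of a maximal chain below it. -/
def height : Mnn n → ℕ
  | bot => 0
  | a _ => 1
  | b _ => 2
  | top => 3

theorem height_strictMono : StrictMono (height (n := n)) := by
  intro x y hxy
  have hle : le x y := hxy.le
  have hne : x ≠ y := hxy.ne
  cases x <;> cases y <;> simp_all [height, le]

theorem height_sup_add_height_inf (x y : Mnn n) :
    height (x ⊔ y) + height (x ⊓ y) = height x + height y := by
  change height (sup x y) + height (inf x y) = _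
  cases x <;> cases y <;> dsimp only [sup, inf] <;> (try split_ifs) <;> rfl

instance : IsModularLattice (Mnn n) :=
  isModularLattice_of_strictMono_valuation height_strictMono height_sup_add_height_inf

/-- The antiautomorphism `aᵢ ↔ bₙ₊₁₋ᵢ`, `0 ↔ 1` of `M_{n,n}`, which exchanges the two levels and
their link elements. -/
def dual : Mnn n → Mnn n
  | bot => top
  | top => bot
  | a i => b i.rev
  | b j => a j.rev

theorem dual_involutive : Function.Involutive (dual (n := n)) := by
  rintro (_ | _ | i | j) <;> simp only [dual, Fin.rev_rev]

theorem dual_aLink (hn : 0 < n) : dual (aLink n hn) = bLink n hn :=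
  congrArg b (Fin.ext (by simp only [Fin.val_rev]; omega))

theorem dual_bLink (hn : 0 < n) : dual (bLink n hn) = aLink n hn := by
  rw [← dual_aLink, dual_involutive]

theorem dual_le_dual_iff {x y : Mnn n} : dual x ≤ dual y ↔ y ≤ x := by
  change le (dual x) (dual y) ↔ le y x
  cases x <;> cases y <;> simp only [dual, le, Fin.rev_inj, Fin.val_rev, eq_comm]
  omega

/-- The antiautomorphism `dual` as an isomorphism of `M_{n,n}` onto its order dual. -/
def dualIso : Mnn n ≃o (Mnn n)ᵒᵈ where
  toEquiv := dual_involutive.toPerm.trans OrderDual.toDual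
  map_rel_iff' := dual_le_dual_iff

theorem preimage_dual_bLevel : dual ⁻¹' bLevel n = aLevel n := by
  ext x
  cases x <;> simp [aLevel, bLevel, dual]

theorem preimage_dual_pair_aLink (hn : 0 < n) (x : Mnn n) :
    dual ⁻¹' {aLink n hn, x} = {bLink n hn, dual x} := by
  rw [← dual_involutive.image_eq_preimage_symm, Set.image_pair, dual_aLink]

theorem preimage_dual_subset_iff : dual ⁻¹' S ⊆ T ↔ S ⊆ dual ⁻¹' T := by
  rw [← dual_involutive.surjective.preimage_subset_preimage_iff, dual_involutive.preimage]

theorem preimage_dual_ssubset_iff : dual ⁻¹' S ⊂ T ↔ S ⊂ dual ⁻¹' T :=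
  and_congr preimage_dual_subset_iff (not_congr preimage_dual_subset_iff.symm)

theorem preimage_dual_subset_star_iff : dual ⁻¹' S ⊆ star n ↔ S ⊆ star n := by
  have hstar : dual ⁻¹' star n = star n := by
    ext x
    cases x <;> simp [star, dual]
  rw [preimage_dual_subset_iff, hstar]

theorem preimage_dual_inter_eq_empty_iff : dual ⁻¹' S ∩ T = ∅ ↔ S ∩ dual ⁻¹' T = ∅ := by
  rw [← Set.disjoint_iff_inter_eq_empty, ← Set.disjoint_iff_inter_eq_empty,
    ← Set.disjoint_preimage_iff dual_involutive.surjective, dual_involutive.preimage]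

theorem isSTDistrib_preimage_dual_iff :
    IsSTDistrib (dual ⁻¹' S) T ↔ IsSTDistrib S (dual ⁻¹' T) := by
  have hpre {S T : Set (Mnn n)} (h : IsSTDistrib S T) : IsSTDistrib (dual ⁻¹' S) (dual ⁻¹' T) :=
    (isSTDistrib_preimage_ofDual.2 h).preimage dualIso dualIso.injective
  exact ⟨fun h => by simpa only [dual_involutive.preimage S] using hpre h,
    fun h => by simpa only [dual_involutive.preimage T] using hpre h⟩

theorem maximalSTPair_preimage_dual (h : MaximalSTPair n S T) :
    MaximalSTPair n (dual ⁻¹' S) (dual ⁻¹' T) := by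
  obtain ⟨hS, hT, hST, hS₀, hT₀, hdist, hmaxS, hmaxT⟩ := h
  refine ⟨preimage_dual_subset_star_iff.2 hS, preimage_dual_subset_star_iff.2 hT, ?_,
    hS₀.preimage dual_involutive.surjective, hT₀.preimage dual_involutive.surjective, ?_, ?_, ?_⟩
  · rw [preimage_dual_inter_eq_empty_iff, dual_involutive.preimage, hST]
  · rwa [isSTDistrib_preimage_dual_iff, dual_involutive.preimage]
  · rintro ⟨S', hlt, hS', hS'T, hdist'⟩
    exact hmaxS ⟨dual ⁻¹' S', preimage_dual_ssubset_iff.1 hlt,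
      preimage_dual_subset_star_iff.2 hS', preimage_dual_inter_eq_empty_iff.2 hS'T,
      isSTDistrib_preimage_dual_iff.2 hdist'⟩
  · rintro ⟨T', hlt, hT', hST', hdist'⟩
    exact hmaxT ⟨dual ⁻¹' T', preimage_dual_ssubset_iff.1 hlt,
      preimage_dual_subset_star_iff.2 hT', preimage_dual_inter_eq_empty_iff.1 hST',
      isSTDistrib_preimage_dual_iff.1 hdist'⟩

theorem isSTDistrib_bLevel (hn : 0 < n) (x : Mnn n) : IsSTDistrib (bLevel n) {aLink n hn, x} := by
  refine isSTDistrib_pair_of_mem_lowerBounds ?_ x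
  rintro _ ⟨j, rfl⟩
  exact aLink_le_b hn j

theorem eq_or_eq_of_isSTMeetDistrib (h : IsSTMeetDistrib S T) (hk : a k ∈ S) (hi : a i ∈ T)
    (hj : a j ∈ T) (hij : i ≠ j) : k = i ∨ k = j := by
  by_contra! hne
  have hdisj : Disjoint (a k) (a i ⊔ a j) :=
    h.disjoint_sup_right hk hi hj (disjoint_a_a hne.1) (disjoint_a_a hne.2)
  rw [a_sup_a hij k.pos] at hdisj
  exact nomatch hdisj.eq_bot_of_le (a_le_bLink k k.pos)

theorem eq_of_isSTMeetDistrib_bLevel (h : IsSTMeetDistrib (bLevel n) T) (hi : a i ∈ T)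
    (hj : a j ∈ T) (hil : a i ≠ aLink n hn) (hjl : a j ≠ aLink n hn) : i = j := by
  by_contra hij
  have hbl : b i.rev ≠ bLink n hn := by
    rw [← dual_aLink]
    exact dual_involutive.injective.ne hil
  have hdisj : Disjoint (b i.rev) (a i ⊔ a j) :=
    h.disjoint_sup_right ⟨_, rfl⟩ hi hj (disjoint_b_a hbl hil) (disjoint_b_a hbl hjl)
  rw [a_sup_a hij hn] at hdisj
  exact nomatch le_bot_iff.1 (hdisj (aLink_le_b hn i.rev) (aLink_le_b hn ⟨0, hn⟩))

theorem subset_bLevel_of_isSTMeetDistrib (hil : a i ≠ aLink n hn) (hS : S ⊆ star n)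
    (hdisj : S ∩ {aLink n hn, a i} = ∅) (h : IsSTMeetDistrib S {aLink n hn, a i}) :
    S ⊆ bLevel n := by
  intro x hx
  refine (star_subset_aLevel_union_bLevel (hS hx)).resolve_left ?_
  rintro ⟨k, rfl⟩
  have hmem : a k ∈ ({aLink n hn, a i} : Set (Mnn n)) :=
    (eq_or_eq_of_isSTMeetDistrib h hx (Or.inl rfl) (Or.inr rfl)
      (ne_of_apply_ne a hil.symm)).imp (congrArg a) (congrArg a)
  exact hdisj.le ⟨hx, hmem⟩

theorem subset_pair_of_isSTMeetDistrib_bLevel (hil : a i ≠ aLink n hn) (hi : a i ∈ T)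
    (hT : T ⊆ star n) (hdisj : bLevel n ∩ T = ∅) (h : IsSTMeetDistrib (bLevel n) T) :
    T ⊆ {aLink n hn, a i} := by
  intro x hx
  obtain ⟨k, rfl⟩ := (star_subset_aLevel_union_bLevel (hT hx)).resolve_right
    fun hb => hdisj.le ⟨hb, hx⟩
  refine or_iff_not_imp_left.2 fun hkl => ?_
  exact congrArg a (eq_of_isSTMeetDistrib_bLevel h hx hi hkl hil)

theorem maximalSTPair_bLevel (hil : a i ≠ aLink n hn) :
    MaximalSTPair n (bLevel n) {aLink n hn, a i} := by
  have hT : {aLink n hn, a i} ⊆ aLevel n := Set.pair_subset ⟨_, rfl⟩ ⟨_, rfl⟩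
  refine ⟨bLevel_subset_star, hT.trans aLevel_subset_star,
    (disjoint_aLevel_bLevel.symm.mono_right hT).inter_eq, ⟨bLink n hn, _, rfl⟩,
    Set.insert_nonempty _ _, isSTDistrib_bLevel hn _, ?_, ?_⟩
  · rintro ⟨S', hlt, hS', hdisj, hdist⟩
    exact hlt.not_subset (subset_bLevel_of_isSTMeetDistrib hil hS' hdisj hdist.1)
  · rintro ⟨T', hlt, hT', hdisj, hdist⟩
    exact hlt.not_subset (subset_pair_of_isSTMeetDistrib_bLevel hil (hlt.subset (Or.inr rfl))
      hT' hdisj hdist.1)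

theorem maximalSTPair_aLevel (hjl : b j ≠ bLink n hn) :
    MaximalSTPair n (aLevel n) {bLink n hn, b j} := by
  have hil : a j.rev ≠ aLink n hn := by
    rw [← dual_bLink]
    exact dual_involutive.injective.ne hjl
  have h := maximalSTPair_preimage_dual (maximalSTPair_bLevel hil)
  rwa [preimage_dual_bLevel, preimage_dual_pair_aLink, dual, Fin.rev_rev] at h

end Mnn

/-- S-level pairs are maximal `ST`-pairs of `M_{n,n}`: `S` is one whole level
`L₂` and `T` consists of the link `l` of the other level `L₁` together with
one further element `x ≠ l` of `L₁`. -/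
theorem s_level_maximal (n : ℕ) (hn : 3 ≤ n) :
    (∀ i : Fin n, Mnn.a i ≠ Mnn.aLink n (by omega) →
      MaximalSTPair n (Mnn.bLevel n) {Mnn.aLink n (by omega), Mnn.a i}) ∧
    (∀ j : Fin n, Mnn.b j ≠ Mnn.bLink n (by omega) →
      MaximalSTPair n (Mnn.aLevel n) {Mnn.bLink n (by omega), Mnn.b j}) :=
  ⟨fun _ hil => Mnn.maximalSTPair_bLevel hil, fun _ hjl => Mnn.maximalSTPair_aLevel hjl⟩
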